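/- Let f : ℕ → {-1, 1} be the completely multiplicative function determined by a set of 'negative' primes 𝒫 with ∑_{p ∈ 𝒫} 1/p < ∞ (f(p) = -1 for p ∈ 𝒫, f(p) = 1 otherwise). Then the density of n such that f(n) ≠ f(n+1) exists and equals 1/2 - (1/2)·∏_{p ∈ 𝒫} (1 - 4/(p+1)), provided 2 ∉ 𝒫 (or with the appropriate convergent product in general). -/

import Mathlib

open Finset Filter
open scoped Classical

noncomputable def tt (p : ℕ) : ℕ → ℕ → ℝ
  | 0, _ => 0
  | K+1, n => if p ∣ n then - tt p K (n / p) else 1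

lemma tt_abs (p K n : ℕ) : |tt p K n| ≤ 1 := by
  induction K generalizing n with
  | zero => simp [tt]
  | succ K ih =>
    rw [tt]; split_ifs
    · rw [abs_neg]; exact ih _
    · simp

lemma tt_periodic (p : ℕ) (hp : 0 < p) (K : ℕ) : Function.Periodic (tt p K) (p ^ K) := by
  induction K with
  | zero => intro n; simp [tt]
  | succ K ih =>
    intro n
    have e : p ^ (K+1) = p * p ^ K := by ring
    have h1 : p ∣ n + p ^ (K+1) ↔ p ∣ n := by
      rw [e]; exact (Nat.dvd_add_left (dvd_mul_right _ _))
    rw [tt, tt]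
    simp only [h1]
    split_ifs with h
    · rw [e, Nat.add_mul_div_left _ _ hp, ih]
    · rfl

lemma tt_eq (p : ℕ) (hp : p.Prime) (K n : ℕ) (h : ¬ p ^ K ∣ n) :
    tt p K n = (-1) ^ (n.factorization p) := by
  induction K generalizing n with
  | zero => simp at h
  | succ K ih =>
    rw [tt]; split_ifs with hd
    · obtain ⟨m, rfl⟩ := hd
      have hm : m ≠ 0 := by rintro rfl; simp at h
      rw [Nat.mul_div_cancel_left _ hp.pos, ih, Nat.factorization_mul hp.ne_zero hm]
      · simp [hp.factorization_self, pow_add]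
      · intro hh; apply h; rw [pow_succ']; exact mul_dvd_mul_left _ hh
    · simp [Nat.factorization_eq_zero_of_not_dvd hd]

lemma tt_sum_step (p : ℕ) (hp : 0 < p) (K N : ℕ) :
    ∑ n ∈ range (p * N), tt p (K+1) n = N * ((p:ℝ) - 1) - ∑ n ∈ range N, tt p K n := by
  induction N with
  | zero => simp
  | succ N ih =>
    rw [Nat.mul_succ, Finset.sum_range_add, ih, sum_range_succ]
    obtain ⟨q, rfl⟩ : ∃ q, p = q + 1 := ⟨p-1, by omega⟩
    rw [sum_range_succ']
    have : ∀ i ∈ range q, tt (q+1) (K+1) ((q+1) * N + (i+1)) = 1 := by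
      intro i hi
      rw [tt, if_neg]
      rw [Nat.dvd_add_right (dvd_mul_right _ _)]
      intro h
      have := Nat.le_of_dvd (by omega) h
      simp at hi; omega
    rw [sum_congr rfl this, tt, if_pos (by simp)]
    simp only [add_zero, Nat.mul_div_cancel_left _ hp]
    simp; ring

lemma tt_mean (p : ℕ) (hp : 0 < p) (K : ℕ) :
    (∑ n ∈ range (p ^ K), tt p K n) / (p:ℝ) ^ K
      = ((p:ℝ) - 1) / (p + 1) * (1 - (-1 / (p:ℝ)) ^ K) := by
  have hp' : (0:ℝ) < p := by exact_mod_cast hp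
  induction K with
  | zero => simp [tt]
  | succ K ih =>
    rw [pow_succ' p K, tt_sum_step p hp]
    rw [div_eq_iff (by positivity)] at ih
    rw [ih, pow_succ (-1 / (p:ℝ))]
    push_cast
    field_simp
    ring

lemma sum_shift (h : ℕ → ℝ) (q : ℕ) (hq : Function.Periodic h q) :
    ∑ n ∈ range q, h (n+1) = ∑ n ∈ range q, h n := by
  have h1 := sum_range_succ h q
  have h2 := sum_range_succ' h q
  have h3 := hq 0
  simp at h3
  linarith

noncomputable def uu (p K n : ℕ) : ℝ := tt p K n * tt p K (n+1)

lemma uu_periodic (p : ℕ) (hp : 0 < p) (K : ℕ) : Function.Periodic (uu p K) (p ^ K) := by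
  intro n
  have := tt_periodic p hp K
  unfold uu
  rw [this n, show n + p ^ K + 1 = (n + 1) + p ^ K by ring, this]

lemma uu_abs (p K n : ℕ) : |uu p K n| ≤ 1 := by
  unfold uu
  rw [abs_mul]
  exact mul_le_one₀ (tt_abs _ _ _) (abs_nonneg _) (tt_abs _ _ _)

lemma uu_mean (p : ℕ) (hp : p.Prime) (K : ℕ) :
    (∑ n ∈ range (p ^ (K+1)), uu p (K+1) n) / (p:ℝ) ^ (K+1)
      = 2 * (((p:ℝ) - 1) / (p + 1) * (1 - (-1 / (p:ℝ)) ^ (K+1))) - 1 := by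
  have hp' : (0:ℝ) < p := by exact_mod_cast hp.pos
  have : ∀ n, uu p (K+1) n = tt p (K+1) n + tt p (K+1) (n+1) - 1 := by
    intro n
    unfold uu
    by_cases h : p ∣ n
    · have h' : ¬ p ∣ n + 1 := by
        rw [Nat.dvd_add_right h]; exact hp.one_lt.ne' ∘ Nat.dvd_one.1
      have : tt p (K+1) (n+1) = 1 := by rw [tt, if_neg h']
      rw [this]; ring
    · have : tt p (K+1) n = 1 := by rw [tt, if_neg h]
      rw [this]; ring
  simp only [this]
  rw [sum_sub_distrib, sum_add_distrib, sum_shift _ _ (tt_periodic p hp.pos (K+1)), ← tt_mean p hp.pos]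
  simp
  field_simp
  ring

lemma uu_mean_tendsto (p : ℕ) (hp : p.Prime) :
    Tendsto (fun K : ℕ => (∑ n ∈ range (p ^ (K+1)), uu p (K+1) n) / (p:ℝ) ^ (K+1)) atTop
      (nhds (1 - 4 / ((p:ℝ) + 1))) := by
  simp only [uu_mean p hp]
  have hp' : (1:ℝ) < p := by exact_mod_cast hp.one_lt
  have h0 : Tendsto (fun K : ℕ => (-1 / (p:ℝ)) ^ (K+1)) atTop (nhds 0) := by
    rw [tendsto_add_atTop_iff_nat (f := fun K : ℕ => (-1 / (p:ℝ)) ^ K)]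
    apply tendsto_pow_atTop_nhds_zero_of_abs_lt_one
    rw [abs_div, abs_neg, abs_one, abs_of_pos (by linarith), div_lt_one (by linarith)]
    exact hp'
  have := (((h0.const_sub 1).const_mul (((p:ℝ) - 1) / (p + 1))).const_mul 2).sub_const 1
  convert this using 2
  field_simp
  ring

lemma crt_sum (h u : ℕ → ℝ) (q r : ℕ) (hq : Function.Periodic h q) (hr : Function.Periodic u r)
    (q0 : 0 < q) (r0 : 0 < r) (hc : q.Coprime r) :
    ∑ n ∈ range (q * r), h n * u n = (∑ n ∈ range q, h n) * ∑ n ∈ range r, u n := by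
  rw [sum_mul_sum, ← sum_product']
  refine sum_bij (fun n _ => (n % q, n % r)) ?_ ?_ ?_ ?_
  · intro n _
    simp [Nat.mod_lt _ q0, Nat.mod_lt _ r0]
  · intro a ha b hb hab
    simp only [Prod.mk.injEq] at hab
    have : a ≡ b [MOD q * r] := (Nat.modEq_and_modEq_iff_modEq_mul hc).1 hab
    simp only [Finset.mem_range] at ha hb
    exact Nat.ModEq.eq_of_lt_of_lt this ha hb
  · rintro ⟨a, b⟩ hab
    simp only [mem_product, Finset.mem_range] at hab
    refine ⟨Nat.chineseRemainder hc a b, ?_, ?_⟩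
    · simp only [Finset.mem_range]
      exact Nat.chineseRemainder_lt_mul hc a b q0.ne' r0.ne'
    · have := (Nat.chineseRemainder hc a b).2
      simp only [Prod.mk.injEq]
      exact ⟨by rw [this.1, Nat.mod_eq_of_lt hab.1], by rw [this.2, Nat.mod_eq_of_lt hab.2]⟩
  · intro n _
    simp [hq.map_mod_nat, hr.map_mod_nat]

lemma prod_mean {P : Set ℕ} (hP : ∀ p ∈ P, Nat.Prime p) (K : ℕ) (S : Finset P) :
    Function.Periodic (fun n => ∏ p ∈ S, uu p K n) (∏ p ∈ S, (p:ℕ) ^ K) ∧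
    ∑ n ∈ range (∏ p ∈ S, (p:ℕ) ^ K), ∏ p ∈ S, uu p K n
      = ∏ p ∈ S, ∑ n ∈ range ((p:ℕ) ^ K), uu p K n := by
  induction S using Finset.induction_on with
  | empty => simp [Function.Periodic]
  | insert a S ha ih =>
    have hpa := hP a a.2
    simp only [prod_insert ha]
    refine ⟨?_, ?_⟩
    · apply Function.Periodic.mul
      · rw [mul_comm]; exact_mod_cast (uu_periodic a hpa.pos K).nat_mul _
      · exact_mod_cast ih.1.nat_mul _
    · rw [crt_sum (uu a K) (fun n => ∏ p ∈ S, uu p K n) _ _ (uu_periodic a hpa.pos K) ih.1, ih.2]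
      · exact pow_pos hpa.pos _
      · exact prod_pos fun p _ => pow_pos (hP p p.2).pos _
      · apply Nat.Coprime.prod_right
        intro p hp
        apply Nat.Coprime.pow
        rw [Nat.coprime_primes hpa (hP p p.2)]
        intro h
        apply ha
        rwa [Subtype.ext h]

lemma periodic_bound (h : ℕ → ℝ) (q : ℕ) (q0 : 0 < q) (hq : Function.Periodic h q) :
    ∃ C, ∀ x : ℕ, |∑ n ∈ range x, h (n+1) - x * ((∑ n ∈ range q, h n) / q)| ≤ C := by
  set D : ℕ → ℝ := fun x => ∑ n ∈ range x, h (n+1) - x * ((∑ n ∈ range q, h n) / q) with hD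
  have hq' : (q:ℝ) ≠ 0 := by exact_mod_cast q0.ne'
  have hs : ∀ x, ∑ n ∈ range q, h (x + n) = ∑ n ∈ range q, h n := by
    intro x
    induction x with
    | zero => simp
    | succ x ih =>
      rw [← ih, ← sum_shift (fun n => h (x + n)) q]
      · apply sum_congr rfl; intro n _; congr 1; ring
      · intro n; simp only; rw [← add_assoc, hq]
  have per : Function.Periodic D q := by
    intro x
    simp only [hD]
    rw [sum_range_add]
    have : ∑ i ∈ range q, h (x + i + 1) = ∑ n ∈ range q, h n := by
      rw [← hs (x+1)]
      apply sum_congr rfl; intro n _; congr 1; ring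
    rw [this]
    push_cast
    field_simp
    ring
  refine ⟨∑ n ∈ range q, |D n|, fun x => ?_⟩
  change |D x| ≤ _
  rw [← per.map_mod_nat]
  exact single_le_sum (f := fun n => |D n|) (fun _ _ => abs_nonneg _) (Finset.mem_range.2 (Nat.mod_lt _ q0))

lemma f_eq {P : Set ℕ} (hP : ∀ p ∈ P, Nat.Prime p)
    (f : ℕ → ℝ) (hf1 : f 1 = 1) (hmul : ∀ m n, f (m * n) = f m * f n)
    (hfp : ∀ p : ℕ, p.Prime → f p = if p ∈ P then -1 else 1) (S : Finset P)
    (n : ℕ) (hn : n ≠ 0) (hS : ∀ p : P, p ∉ S → ¬ (p:ℕ) ∣ n) :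
    f n = ∏ p ∈ S, (-1) ^ (n.factorization p) := by
  induction n using induction_on_primes with
  | zero => exact absurd rfl hn
  | one => simp [hf1]
  | prime_mul q a hq ih =>
    have ha : a ≠ 0 := by rintro rfl; simp at hn
    rw [hmul, ih ha (fun p hp hd => hS p hp (hd.mul_left _)), Nat.factorization_mul hq.ne_zero ha]
    simp only [Finsupp.add_apply, pow_add, prod_mul_distrib]
    congr 1
    rw [hfp q hq]
    split_ifs with h
    · have hm : (⟨q, h⟩ : P) ∈ S := by
        by_contra hh
        exact hS _ hh (dvd_mul_right _ _)
      rw [prod_eq_single_of_mem _ hm]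
      · simp [hq.factorization_self]
      · intro b _ hb
        rw [Nat.factorization_eq_zero_of_not_dvd, pow_zero]
        rw [Nat.prime_dvd_prime_iff_eq (hP b b.2) hq]
        intro e; exact hb (Subtype.ext e)
    · symm
      apply prod_eq_one
      intro b _
      rw [Nat.factorization_eq_zero_of_not_dvd, pow_zero]
      rw [Nat.prime_dvd_prime_iff_eq (hP b b.2) hq]
      rintro rfl
      exact h b.2

lemma f_sq {P : Set ℕ} 
    (f : ℕ → ℝ) (hf1 : f 1 = 1) (hmul : ∀ m n, f (m * n) = f m * f n)
    (hfp : ∀ p : ℕ, p.Prime → f p = if p ∈ P then -1 else 1) 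
    (n : ℕ) (hn : n ≠ 0) : f n = 1 ∨ f n = -1 := by
  induction n using induction_on_primes with
  | zero => exact absurd rfl hn
  | one => simp [hf1]
  | prime_mul q a hq ih =>
    have ha : a ≠ 0 := by rintro rfl; simp at hn
    rw [hmul, hfp q hq]
    rcases ih ha with h | h <;> rw [h] <;> split_ifs <;> simp

lemma count_dvd (x d : ℕ) (d0 : 0 < d) :
    (((range x).filter (fun n => d ∣ n + 1 ∨ d ∣ n + 2)).card : ℝ) ≤ 2 * (x + 1) * (1 / d) := by
  have h1 : ∀ y : ℕ, (((range y).filter (fun n => d ∣ n + 1)).card : ℝ) ≤ y * (1 / d) := by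
    intro y
    have : ((range y).filter (fun n => d ∣ n + 1)).card = y / d := by
      rw [← Nat.card_multiples]
    rw [this]
    simpa [div_eq_mul_inv] using (Nat.cast_div_le (α := ℝ) (m := y) (n := d))
  have h2 : ((range x).filter (fun n => d ∣ n + 2)).card ≤
      ((range (x+1)).filter (fun n => d ∣ n + 1)).card := by
    apply card_le_card_of_injOn (fun n => n + 1)
    · intro n hn
      simp at hn ⊢
      exact hn
    · intro a _ b _ h; simpa using h
  have h3 : ((range x).filter (fun n => d ∣ n + 1 ∨ d ∣ n + 2)).card ≤
     ((range x).filter (fun n => d ∣ n + 1)).card + ((range x).filter (fun n => d ∣ n + 2)).card := by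
    rw [filter_or]; exact card_union_le _ _
  have a1 := h1 x
  have a2 := h1 (x+1)
  have h3' : (((range x).filter (fun n => d ∣ n + 1 ∨ d ∣ n + 2)).card : ℝ) ≤
     ((range x).filter (fun n => d ∣ n + 1)).card + ((range (x+1)).filter (fun n => d ∣ n + 1)).card := by
    exact_mod_cast h3.trans (Nat.add_le_add_left h2 _)
  have : (0:ℝ) ≤ 1 / d := by positivity
  push_cast at a2
  nlinarith

/-- Main error bound. -/
lemma err_bound {P : Set ℕ} (hP : ∀ p ∈ P, Nat.Prime p)
    (f : ℕ → ℝ) (hf1 : f 1 = 1) (hmul : ∀ m n, f (m * n) = f m * f n)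
    (hfp : ∀ p : ℕ, p.Prime → f p = if p ∈ P then -1 else 1) (S : Finset P) (K : ℕ)
    (ε : ℝ) (hε : ∀ T : Finset P, Disjoint T S → ∑ p ∈ T, 1 / ((p:ℕ):ℝ) ≤ ε)
    (hK : ∑ p ∈ S, 1 / (((p:ℕ) ^ K : ℕ) : ℝ) ≤ ε) (x : ℕ) :
    |∑ n ∈ range x, f (n+1) * f (n+2) - ∑ n ∈ range x, ∏ p ∈ S, uu p K (n+1)| ≤
      8 * (x + 1) * ε := by
  have hfin : Set.Finite {p : P | (p:ℕ) ≤ x + 1} :=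
    Set.Finite.preimage Subtype.val_injective.injOn (Set.finite_Iic (x+1))
  set T : Finset P := hfin.toFinset \ S with hT
  have hTS : Disjoint T S := sdiff_disjoint
  set B : Finset ℕ := (T.biUnion fun p => (range x).filter (fun n => (p:ℕ) ∣ n + 1 ∨ (p:ℕ) ∣ n + 2)) ∪
    (S.biUnion fun p => (range x).filter (fun n => (p:ℕ) ^ K ∣ n + 1 ∨ (p:ℕ) ^ K ∣ n + 2)) with hB
  have hBc : (B.card : ℝ) ≤ 4 * (x+1) * ε := by
    have c1 : (B.card : ℝ) ≤ ∑ p ∈ T, (((range x).filter (fun n => (p:ℕ) ∣ n + 1 ∨ (p:ℕ) ∣ n + 2)).card : ℝ)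
        + ∑ p ∈ S, (((range x).filter (fun n => (p:ℕ) ^ K ∣ n + 1 ∨ (p:ℕ) ^ K ∣ n + 2)).card : ℝ) := by
      exact_mod_cast (card_union_le _ _).trans (Nat.add_le_add card_biUnion_le card_biUnion_le)
    have c2 := sum_le_sum (s := T) fun p _ => count_dvd x p (hP p p.2).pos
    have c3 := sum_le_sum (s := S) fun p _ => count_dvd x ((p:ℕ) ^ K) (pow_pos (hP p p.2).pos K)
    rw [← mul_sum] at c2 c3
    have c4 := mul_le_mul_of_nonneg_left (hε T hTS) (by positivity : (0:ℝ) ≤ 2 * (x+1))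
    have c5 := mul_le_mul_of_nonneg_left hK (by positivity : (0:ℝ) ≤ 2 * (x+1))
    linarith
  have good : ∀ n ∈ range x, n ∉ B → f (n+1) * f (n+2) - ∏ p ∈ S, uu p K (n+1) = 0 := by
    intro n hn hnB
    have hn' := Finset.mem_range.1 hn
    have g1 : ∀ p : P, p ∉ S → ¬ ((p:ℕ) ∣ n + 1 ∨ (p:ℕ) ∣ n + 2) := by
      intro p hp hd
      apply hnB
      rw [hB, mem_union, mem_biUnion]
      left
      refine ⟨p, ?_, by simp [hn', hd]⟩
      have : (p:ℕ) ≤ x + 1 := by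
        rcases hd with h | h <;> have := Nat.le_of_dvd (by omega) h <;> omega
      simp [hT, hp, this]
    have g2 : ∀ p ∈ S, ¬ ((p:ℕ) ^ K ∣ n + 1 ∨ (p:ℕ) ^ K ∣ n + 2) := by
      intro p hp hd
      apply hnB
      rw [hB, mem_union, mem_biUnion, mem_biUnion]
      right
      exact ⟨p, hp, by simp [hn', hd]⟩
    rw [f_eq hP f hf1 hmul hfp S (n+1) (by omega) (fun p hp h => g1 p hp (Or.inl h)),
      f_eq hP f hf1 hmul hfp S (n+2) (by omega) (fun p hp h => g1 p hp (Or.inr h)), ← prod_mul_distrib,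
      sub_eq_zero]
    apply prod_congr rfl
    intro p hp
    unfold uu
    rw [tt_eq p (hP p p.2) K _ (fun h => g2 p hp (Or.inl h)),
      tt_eq p (hP p p.2) K _ (fun h => g2 p hp (Or.inr h))]
  have bad : ∀ n, |f (n+1) * f (n+2) - ∏ p ∈ S, uu p K (n+1)| ≤ 2 := by
    intro n
    have b1 : |f (n+1) * f (n+2)| = 1 := by
      rw [abs_mul]
      rcases f_sq f hf1 hmul hfp (n+1) (by omega) with h | h <;>
      rcases f_sq f hf1 hmul hfp (n+2) (by omega) with h' | h' <;> rw [h, h'] <;> simp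
    have b2 : |∏ p ∈ S, uu p K (n+1)| ≤ 1 := by
      rw [abs_prod]
      exact prod_le_one (fun _ _ => abs_nonneg _) (fun _ _ => uu_abs _ _ _)
    have := abs_sub (f (n+1) * f (n+2)) (∏ p ∈ S, uu p K (n+1))
    linarith
  rw [← sum_sub_distrib]
  have hBs : B ⊆ range x := by
    rw [hB]
    apply union_subset <;> rw [biUnion_subset] <;> intro p _ <;> exact filter_subset _ _
  rw [← sum_subset hBs good]
  calc _ ≤ ∑ n ∈ B, |f (n+1) * f (n+2) - ∏ p ∈ S, uu p K (n+1)| := abs_sum_le_sum_abs _ _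
    _ ≤ ∑ n ∈ B, (2:ℝ) := sum_le_sum fun n _ => bad n
    _ = 2 * B.card := by simp [mul_comm]
    _ ≤ _ := by linarith

lemma mean_tendsto {P : Set ℕ} (hP : ∀ p ∈ P, Nat.Prime p)
    (hsum : Summable (fun p : P => 1 / ((p : ℕ) : ℝ)))
    (f : ℕ → ℝ) (hf1 : f 1 = 1) (hmul : ∀ m n, f (m * n) = f m * f n)
    (hfp : ∀ p : ℕ, p.Prime → f p = if p ∈ P then -1 else 1) :
    Tendsto (fun x : ℕ => (∑ n ∈ range x, f (n+1) * f (n+2)) / x) atTop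
      (nhds (∏' p : P, (1 - 4 / (((p : ℕ) : ℝ) + 1)))) := by
  set L := ∏' p : P, (1 - 4 / (((p : ℕ) : ℝ) + 1)) with hL
  have hpos : ∀ p : P, (0:ℝ) < (p:ℕ) := fun p => by exact_mod_cast (hP p p.2).pos
  have hmult : Multipliable (fun p : P => (1 - 4 / (((p : ℕ) : ℝ) + 1))) := by
    have : Summable (fun p : P => - (4 / (((p : ℕ) : ℝ) + 1))) := by
      apply Summable.neg
      refine Summable.of_nonneg_of_le (fun p => by positivity) (fun p => ?_) (hsum.mul_left 4)
      have := hpos p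
      rw [mul_one_div]
      gcongr
      linarith
    simpa [sub_eq_add_neg] using Real.multipliable_one_add_of_summable this
  have hprod := hmult.hasProd
  rw [← hL] at hprod
  rw [Metric.tendsto_atTop]
  intro e he
  set ε := e / 40 with hεd
  have hε : 0 < ε := by positivity
  -- choose S
  obtain ⟨s0, hs0⟩ := summable_iff_vanishing_norm.1 hsum ε hε
  have hev : ∀ᶠ S : Finset P in atTop, |∏ p ∈ S, (1 - 4 / (((p : ℕ) : ℝ) + 1)) - L| < ε := by
    have := Metric.tendsto_nhds.1 (show Tendsto _ atTop _ from hprod) ε hε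
    simpa [Real.dist_eq] using this
  obtain ⟨S, hS0, hSL⟩ := ((eventually_ge_atTop s0).and hev).exists
  have hSt : ∀ T : Finset P, Disjoint T S → ∑ p ∈ T, 1 / ((p:ℕ):ℝ) ≤ ε := by
    intro T hT
    have := hs0 T (hT.mono_right hS0)
    exact (le_abs_self _).trans this.le
  -- choose K
  have k1 : Tendsto (fun K : ℕ => ∑ p ∈ S, 1 / (((p:ℕ) ^ (K+1) : ℕ) : ℝ)) atTop (nhds 0) := by
    rw [← sum_const_zero (s := S)]
    apply tendsto_finsetSum
    intro p _
    have hp' : (1:ℝ) < (p:ℕ) := by exact_mod_cast (hP p p.2).one_lt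
    rw [tendsto_add_atTop_iff_nat (f := fun K : ℕ => 1 / (((p:ℕ) ^ K : ℕ) : ℝ))]
    have := tendsto_pow_atTop_nhds_zero_of_lt_one (r := 1 / ((p:ℕ):ℝ)) (by positivity)
      (by rw [div_lt_one (by linarith)]; exact hp')
    simpa using this
  have k2 : Tendsto (fun K : ℕ => ∏ p ∈ S, ((∑ n ∈ range ((p:ℕ) ^ (K+1)), uu p (K+1) n) / ((p:ℕ):ℝ) ^ (K+1)))
      atTop (nhds (∏ p ∈ S, (1 - 4 / (((p : ℕ) : ℝ) + 1)))) :=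
    tendsto_finsetProd _ fun p _ => uu_mean_tendsto p (hP p p.2)
  have k2' := Metric.tendsto_nhds.1 k2 ε hε
  obtain ⟨K, hK1, hK2⟩ := ((k1.eventually (ge_mem_nhds hε)).and k2').exists
  rw [Real.dist_eq] at hK2
  obtain ⟨hper, hval⟩ := prod_mean hP (K+1) S
  have hq0 : 0 < ∏ p ∈ S, (p:ℕ) ^ (K+1) := prod_pos fun p _ => pow_pos (hP p p.2).pos _
  obtain ⟨C, hC⟩ := periodic_bound _ _ hq0 hper
  rw [hval] at hC
  push_cast at hC
  rw [← prod_div_distrib] at hC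
  set M := ∏ p ∈ S, ((∑ n ∈ range ((p:ℕ) ^ (K+1)), uu p (K+1) n) / ((p:ℕ):ℝ) ^ (K+1)) with hM
  obtain ⟨N, hN⟩ := exists_nat_gt (C / ε)
  refine ⟨N + 1, fun x hx => ?_⟩
  have hx1 : (N:ℝ) + 1 ≤ x := by exact_mod_cast hx
  have hN0 : (0:ℝ) ≤ N := by positivity
  have hx0 : (0:ℝ) < x := by linarith
  have hCx : C ≤ ε * x := by
    rw [div_lt_iff₀ hε] at hN
    nlinarith
  have E1 := err_bound hP f hf1 hmul hfp S (K+1) ε hSt hK1 x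
  have E2 := hC x
  have E3 : |M - L| ≤ 2 * ε := by
    have := abs_sub_le M (∏ p ∈ S, (1 - 4 / (((p : ℕ) : ℝ) + 1))) L
    linarith
  rw [Real.dist_eq, div_sub' hx0.ne', abs_div, abs_of_pos hx0, div_lt_iff₀ hx0]
  set A := ∑ n ∈ range x, f (n+1) * f (n+2)
  set G := ∑ n ∈ range x, ∏ p ∈ S, uu p (K+1) (n+1)
  have e1 : A - x * L = (A - G) + (G - x * M) + x * (M - L) := by ring
  have e2 : |x * (M - L)| ≤ x * (2 * ε) := by
    rw [abs_mul, abs_of_pos hx0]; gcongr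
  have e3 := abs_add_three (A - G) (G - x * M) (x * (M - L))
  rw [e1]
  have : e = 40 * ε := by rw [hεd]; ring
  rw [this]
  have h8 : 8 * ((x:ℝ) + 1) * ε ≤ 16 * (x * ε) := by nlinarith
  have hxe : 0 < x * ε := by positivity
  linarith

theorem lucht_tuttas_sign_change_density (Pneg : Set ℕ) (hPneg : ∀ p ∈ Pneg, Nat.Prime p)
    (h2 : 2 ∉ Pneg)
    (hsum : Summable (fun p : Pneg => 1 / ((p : ℕ) : ℝ)))
    (f : ℕ → ℝ) (hf1 : f 1 = 1) (hmul : ∀ m n, f (m * n) = f m * f n)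
    (hfp : ∀ p : ℕ, p.Prime → f p = if p ∈ Pneg then -1 else 1) :
    Tendsto (fun x : ℕ =>
        (((Finset.Icc 1 x).filter (fun n => f n ≠ f (n + 1))).card : ℝ) / x) atTop
      (nhds (1 / 2 - 1 / 2 * ∏' p : Pneg, (1 - 4 / (((p : ℕ) : ℝ) + 1)))) := by
  have h := ((mean_tendsto hPneg hsum f hf1 hmul hfp).const_mul (1/2)).const_sub (1/2)
  refine h.congr' ?_
  filter_upwards [eventually_gt_atTop 0] with x hx
  have hx0 : (0:ℝ) < x := by exact_mod_cast hx
  have key : (((Finset.Icc 1 x).filter (fun n => f n ≠ f (n + 1))).card : ℝ) =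
      ∑ n ∈ range x, (1/2 - 1/2 * (f (n+1) * f (n+2))) := by
    rw [card_filter, Nat.cast_sum]
    rw [← Finset.Ico_add_one_right_eq_Icc, Finset.sum_Ico_eq_sum_range]
    simp only [Nat.add_sub_cancel]
    apply sum_congr rfl
    intro n _
    rw [show 1 + n = n + 1 by ring, show n + 1 + 1 = n + 2 by ring]
    rcases f_sq f hf1 hmul hfp (n+1) (by omega) with h | h <;>
      rcases f_sq f hf1 hmul hfp (n+2) (by omega) with h' | h' <;> rw [h, h'] <;> norm_num
  rw [key, sum_sub_distrib, ← mul_sum]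
  simp
  field_simp
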